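/- Let F be a Ferrers diagram of semiperimeter n+1. For c ∈ Rec_min(G(F)) with CanonTop(c) = (U^0, V^1, U^1, V^2, …), let ζ(c) be the word obtained by concatenating the blocks V^1, U^1, V^2, U^2, … (omitting U^0 = {0}), listing each V-block in increasing order and each U-block in decreasing order. Then ζ(c) is a permutation of {1,…,n}, and the map c ↦ ζ(c) is a bijection from Rec_min(G(F)) onto the set of permutations of {1,…,n} whose set of descent bottoms is exactly rows(F) \ {0}. -/

import Mathlib

open Classical

/-- A Ferrers diagram of semiperimeter `n + 1`, encoded by the set of its row labels
(labels `0, …, n` run along the south-east border; `0` labels the top row and the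
last label `n` is a column label). -/
structure Ferrers (n : ℕ) where
  rows : Finset (Fin (n + 1))
  zero_mem : 0 ∈ rows
  last_not_mem : Fin.last n ∉ rows

namespace Ferrers

/-- `(i, j)` is a cell of the diagram: `i` is a row label, `j` a column label, `i < j`. -/
def Cell {n : ℕ} (F : Ferrers n) (i j : Fin (n + 1)) : Prop :=
  i ∈ F.rows ∧ j ∉ F.rows ∧ i < j

/-- Adjacency in the Ferrers graph `G(F)`. -/
def Adj {n : ℕ} (F : Ferrers n) (u v : Fin (n + 1)) : Prop :=
  F.Cell u v ∨ F.Cell v u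

/-- Degree of a vertex in `G(F)`. -/
noncomputable def deg {n : ℕ} (F : Ferrers n) (v : Fin (n + 1)) : ℕ :=
  {u | F.Adj v u}.ncard

/-- Toppling a single vertex.  The height at the sink `0` is kept equal to `c 0`
(grains sent to the sink vanish); toppling the sink sends one grain to each of
its neighbours. -/
noncomputable def topple {n : ℕ} (F : Ferrers n) (c : Fin (n + 1) → ℕ)
    (v : Fin (n + 1)) : Fin (n + 1) → ℕ :=
  fun u =>
    if u = 0 then c 0
    else if u = v then c v - F.deg v
    else if F.Adj v u then c u + 1
    else c u

/-- Toppling the vertices of a list in order. -/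
noncomputable def toppleList {n : ℕ} (F : Ferrers n) (c : Fin (n + 1) → ℕ)
    (l : List (Fin (n + 1))) : Fin (n + 1) → ℕ :=
  l.foldl F.topple c

/-- Simultaneous toppling of a set of vertices. -/
noncomputable def toppleSet {n : ℕ} (F : Ferrers n) (c : Fin (n + 1) → ℕ)
    (S : Set (Fin (n + 1))) : Fin (n + 1) → ℕ :=
  fun u =>
    if u = 0 then c 0
    else c u + {w ∈ S | F.Adj w u}.ncard - if u ∈ S then F.deg u else 0

/-- A configuration is stable if every non-sink vertex has fewer grains than its degree. -/
def Stable {n : ℕ} (F : Ferrers n) (c : Fin (n + 1) → ℕ) : Prop :=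
  ∀ v, v ≠ 0 → c v < F.deg v

/-- A Dhar (burning) ordering for `c`: an ordering `v₀ = 0, v₁, …, vₙ` of all the
vertices such that each `vᵢ` (`i ≥ 1`) is unstable after toppling `v₀, …, v_{i-1}`. -/
def DharSeq {n : ℕ} (F : Ferrers n) (c : Fin (n + 1) → ℕ) (l : List (Fin (n + 1))) : Prop :=
  l.length = n + 1 ∧ l.Nodup ∧ l.head? = some 0 ∧
    ∀ i, ∀ h : i < l.length, 1 ≤ i →
      F.deg (l.get ⟨i, h⟩) ≤ F.toppleList c (l.take i) (l.get ⟨i, h⟩)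

/-- Recurrent configurations (via Dhar's criterion).  The height at the sink is
normalised to `0`. -/
def Recurrent {n : ℕ} (F : Ferrers n) (c : Fin (n + 1) → ℕ) : Prop :=
  c 0 = 0 ∧ F.Stable c ∧ ∃ l, F.DharSeq c l

/-- Minimal recurrent configurations: recurrent with minimal total number of grains. -/
def RecMin {n : ℕ} (F : Ferrers n) (c : Fin (n + 1) → ℕ) : Prop :=
  F.Recurrent c ∧ ∀ c', F.Recurrent c' → (∑ v, c v) ≤ ∑ v, c' v

/-- Canonical toppling: block `0` is `{0}` (the sink); from then on, blocks with odd
index are the sets of currently unstable column vertices and blocks with even index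
the sets of currently unstable row vertices.  The first component is the configuration
just before toppling the block recorded in the second component. -/
noncomputable def canonAux {n : ℕ} (F : Ferrers n) (c : Fin (n + 1) → ℕ) :
    ℕ → ((Fin (n + 1) → ℕ) × Set (Fin (n + 1)))
  | 0 => (c, {0})
  | k + 1 =>
    let c' := F.toppleSet (canonAux F c k).1 (canonAux F c k).2
    (c', {v | v ≠ 0 ∧ (if k % 2 = 0 then v ∉ F.rows else v ∈ F.rows) ∧ F.deg v ≤ c' v})

/-- The `k`-th block of the canonical toppling of `c`:
`canonTop F c 0 = U⁰ = {0}`, `canonTop F c (2i-1) = Vⁱ`, `canonTop F c (2i) = Uⁱ`. -/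
noncomputable def canonTop {n : ℕ} (F : Ferrers n) (c : Fin (n + 1) → ℕ) (k : ℕ) :
    Set (Fin (n + 1)) :=
  (F.canonAux c k).2

/-- The configuration just before toppling the `k`-th block of the canonical toppling. -/
noncomputable def canonConfig {n : ℕ} (F : Ferrers n) (c : Fin (n + 1) → ℕ) (k : ℕ) :
    Fin (n + 1) → ℕ :=
  (F.canonAux c k).1

/-- The index of the block of the canonical toppling of `c` containing `v`. -/
noncomputable def bIdx {n : ℕ} (F : Ferrers n) (c : Fin (n + 1) → ℕ) (v : Fin (n + 1)) : ℕ :=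
  sInf {k | v ∈ F.canonTop c k}

/-- `T` is a EW-tableau on `F` (entries of non-cells are normalised to `false`):
the top row contains only `1`s, every other row contains a `0`, and there is no
rectangle with two diagonally opposite `0`s and two `1`s in the other corners. -/
def IsEW {n : ℕ} (F : Ferrers n) (T : Fin (n + 1) → Fin (n + 1) → Bool) : Prop :=
  (∀ i j, ¬F.Cell i j → T i j = false) ∧
  (∀ j, F.Cell 0 j → T 0 j = true) ∧
  (∀ i, i ∈ F.rows → i ≠ 0 → ∃ j, F.Cell i j ∧ T i j = false) ∧
  (∀ i i' j j', F.Cell i j → F.Cell i j' → F.Cell i' j → F.Cell i' j' →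
    T i j = T i' j' → T i j' = T i' j → T i j = T i j')

/-- The configuration associated to a tableau: row vertices count the `1`s in their
row, column vertices count the `0`s in their column (the sink is normalised to `0`). -/
noncomputable def phiTC {n : ℕ} (F : Ferrers n) (T : Fin (n + 1) → Fin (n + 1) → Bool) :
    Fin (n + 1) → ℕ :=
  fun v =>
    if v = 0 then 0
    else if v ∈ F.rows then {j | F.Cell v j ∧ T v j = true}.ncard
    else {i | F.Cell i v ∧ T i v = false}.ncard

/-- The tableau associated to a (minimal recurrent) configuration: a cell `(i, j)`
gets a `1` exactly when `i` lies in an earlier block than `j` in the canonical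
toppling of `c`. -/
noncomputable def phiCT {n : ℕ} (F : Ferrers n) (c : Fin (n + 1) → ℕ) :
    Fin (n + 1) → Fin (n + 1) → Bool :=
  fun i j => if F.Cell i j ∧ F.bIdx c i < F.bIdx c j then true else false

/-- The supplementary tableau of `T`: `S i j = 1` exactly when the row vertex `i`
lies in an earlier block than the column vertex `j` in `CanonTop (φ_TC T)`. -/
noncomputable def suppS {n : ℕ} (F : Ferrers n) (T : Fin (n + 1) → Fin (n + 1) → Bool)
    (i j : Fin (n + 1)) : Bool :=
  if F.bIdx (F.phiTC T) i < F.bIdx (F.phiTC T) j then true else false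

/-- The entry of `T` in cell `(j, k)` is a cornersupport entry. -/
def Cornersupport {n : ℕ} (F : Ferrers n) (T : Fin (n + 1) → Fin (n + 1) → Bool)
    (j k : Fin (n + 1)) : Prop :=
  ∃ j' k', j' ∈ F.rows ∧ k' ∉ F.rows ∧ j' ≠ j ∧ k' ≠ k ∧
    F.suppS T j' k' = !(T j k) ∧ F.suppS T j' k = T j k ∧ F.suppS T j k' = T j k

/-- `ν_v(T)`: the number of non-cornersupport `0`s in row `v` (if `v` is a row label),
resp. non-cornersupport `1`s in column `v` (if `v` is a column label). -/
noncomputable def nu {n : ℕ} (F : Ferrers n) (T : Fin (n + 1) → Fin (n + 1) → Bool)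
    (v : Fin (n + 1)) : ℕ :=
  if v ∈ F.rows then {k | F.Cell v k ∧ T v k = false ∧ ¬F.Cornersupport T v k}.ncard
  else {i | F.Cell i v ∧ T i v = true ∧ ¬F.Cornersupport T i v}.ncard

/-- `μ_v(c)`: if `v ∈ Uⁱ`, the number of `k ∈ Vⁱ` with `k > v`; if `v ∈ Vⁱ`,
the number of `k ∈ U^{i-1}` with `k < v`.  In both cases the relevant block is the
one immediately preceding the block of `v`. -/
noncomputable def mu {n : ℕ} (F : Ferrers n) (c : Fin (n + 1) → ℕ) (v : Fin (n + 1)) : ℕ :=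
  if v ∈ F.rows then {k | v < k ∧ k ∈ F.canonTop c (F.bIdx c v - 1)}.ncard
  else {k | k < v ∧ k ∈ F.canonTop c (F.bIdx c v - 1)}.ncard

/-- The minimal recurrent configuration with the same canonical toppling as `c`:
if `j ∈ Uⁱ` then `minrec c j = |{ℓ ∈ Vᵏ : j < ℓ, k > i}|`, and if `j ∈ Vⁱ` then
`minrec c j = |{ℓ ∈ Uᵏ : ℓ < j, k ≥ i}|` (blocks `Vᵏ` sit at odd index `2k - 1`,
blocks `Uᵏ` at even index `2k`). -/
noncomputable def minrecFun {n : ℕ} (F : Ferrers n) (c : Fin (n + 1) → ℕ) :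
    Fin (n + 1) → ℕ :=
  fun j =>
    if j = 0 then 0
    else if j ∈ F.rows then
      {l | j < l ∧ ∃ k, F.bIdx c j < 2 * k + 1 ∧ l ∈ F.canonTop c (2 * k + 1)}.ncard
    else
      {l | l < j ∧ ∃ k, F.bIdx c j < 2 * k ∧ l ∈ F.canonTop c (2 * k)}.ncard

/-- The number of edges of `G(F)` (equivalently, the number of cells of `F`). -/
noncomputable def edgeCount {n : ℕ} (F : Ferrers n) : ℕ :=
  {p : Fin (n + 1) × Fin (n + 1) | F.Cell p.1 p.2}.ncard

end Ferrers

namespace Ferrers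

/-- The `k`-th block of the canonical toppling of `c` listed as a word: increasing
for the (odd-indexed) column blocks `Vⁱ`, decreasing for the (even-indexed) row
blocks `Uⁱ`. -/
noncomputable def blockWord {n : ℕ} (F : Ferrers n) (c : Fin (n + 1) → ℕ) (k : ℕ) :
    List (Fin (n + 1)) :=
  let s := (Set.toFinite (F.canonTop c k)).toFinset.sort (· ≤ ·)
  if k % 2 = 1 then s else s.reverse

/-- The permutation `ζ c`: the concatenation
`inc(V¹) dec(U¹) inc(V²) dec(U²) ⋯` (the initial block `U⁰ = {0}` is omitted). -/
noncomputable def zeta {n : ℕ} (F : Ferrers n) (c : Fin (n + 1) → ℕ) :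
    List (Fin (n + 1)) :=
  (((List.range (2 * n + 2)).drop 1).map (F.blockWord c)).flatten

end Ferrers

/-- The set of descent bottoms of a word: letters immediately preceded by a
greater letter. -/
def descentBottoms {α : Type*} [LT α] (l : List α) : Set α :=
  {v | ∃ i, ∃ h : i + 1 < l.length,
    l.get ⟨i + 1, h⟩ = v ∧ l.get ⟨i + 1, h⟩ < l.get ⟨i, Nat.lt_of_succ_lt h⟩}

namespace Ferrers

variable {n : ℕ} {F : Ferrers n}

theorem Adj.symm {u v : Fin (n + 1)} (h : F.Adj u v) : F.Adj v u := Or.symm h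

theorem Adj.mem_rows_iff {u v : Fin (n + 1)} (h : F.Adj u v) : u ∈ F.rows ↔ v ∉ F.rows := by
  rcases h with ⟨h1, h2, -⟩ | ⟨h1, h2, -⟩ <;> tauto

theorem deg_eq_ncard (F : Ferrers n) (v : Fin (n + 1)) : F.deg v = {w | F.Adj w v}.ncard := by
  unfold deg
  congr 1
  ext u
  exact ⟨Adj.symm, Adj.symm⟩

/-- A rank function for the graph: minimal exactly at the sink, and separating neighbours. -/
def IsRank (F : Ferrers n) (r : Fin (n + 1) → ℕ) : Prop :=
  (∀ v, v ≠ 0 → r 0 < r v) ∧ ∀ u v, F.Adj u v → r u ≠ r v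

/-- The configuration counting, at each non-sink vertex, the neighbours of larger rank. -/
noncomputable def laterCount (F : Ferrers n) (r : Fin (n + 1) → ℕ) : Fin (n + 1) → ℕ :=
  fun v => if v = 0 then 0 else {w | F.Adj w v ∧ r v < r w}.ncard

@[simp]
theorem laterCount_zero (r : Fin (n + 1) → ℕ) : F.laterCount r 0 = 0 := by
  simp [laterCount]

theorem laterCount_of_ne {v : Fin (n + 1)} (r : Fin (n + 1) → ℕ) (hv : v ≠ 0) :
    F.laterCount r v = {w | F.Adj w v ∧ r v < r w}.ncard := by
  simp [laterCount, hv]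

theorem ncard_earlier_add_later {r : Fin (n + 1) → ℕ} (hr : F.IsRank r) (v : Fin (n + 1)) :
    {w | F.Adj w v ∧ r w < r v}.ncard + {w | F.Adj w v ∧ r v < r w}.ncard = F.deg v := by
  rw [deg_eq_ncard, ← Set.ncard_union_eq]
  · congr 1
    ext w
    have := hr.2 w v
    simp only [Set.mem_union, Set.mem_ofPred_eq]
    constructor
    · rintro (h | h) <;> exact h.1
    · intro h
      have := this h
      rcases lt_or_gt_of_ne this with h' | h' <;> simp [h, h']
  · rw [Set.disjoint_left]
    rintro w ⟨-, h1⟩ ⟨-, h2⟩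
    omega

theorem toppleList_apply {v : Fin (n + 1)} (hv : v ≠ 0) (l : List (Fin (n + 1)))
    (c : Fin (n + 1) → ℕ) (hl : l.Nodup) (hvl : v ∉ l) :
    F.toppleList c l v = c v + {w | w ∈ l ∧ F.Adj w v}.ncard := by
  induction l generalizing c with
  | nil => simp [toppleList]
  | cons a l ih =>
    rw [List.nodup_cons] at hl
    rw [List.mem_cons, not_or] at hvl
    have hstep : F.toppleList c (a :: l) v = F.toppleList (F.topple c a) l v := rfl
    rw [hstep, ih _ hl.2 hvl.2]
    by_cases ha : F.Adj a v
    · have hset : {w | w ∈ a :: l ∧ F.Adj w v} = insert a {w | w ∈ l ∧ F.Adj w v} := by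
        ext w
        simp only [List.mem_cons, Set.mem_ofPred_eq, Set.mem_insert_iff]
        constructor
        · tauto
        · rintro (rfl | h) <;> tauto
      rw [hset, Set.ncard_insert_of_notMem (by simp [hl.1])]
      simp only [topple, hv, hvl.1, ha, if_true, if_false]
      omega
    · have hset : {w | w ∈ a :: l ∧ F.Adj w v} = {w | w ∈ l ∧ F.Adj w v} := by
        ext w
        simp only [List.mem_cons, Set.mem_ofPred_eq]
        constructor
        · rintro ⟨rfl | h, h'⟩ <;> tauto
        · tauto
      rw [hset]
      simp only [topple, hv, hvl.1, ha, if_false]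

theorem DharSeq.mem {c : Fin (n + 1) → ℕ} {l : List (Fin (n + 1))} (h : F.DharSeq c l)
    (v : Fin (n + 1)) : v ∈ l := by
  have hu : l.toFinset = Finset.univ := by
    apply Finset.eq_univ_of_card
    rw [List.toFinset_card_of_nodup h.2.1, h.1, Fintype.card_fin]
  rw [← List.mem_toFinset, hu]
  exact Finset.mem_univ v

theorem DharSeq.isRank {c : Fin (n + 1) → ℕ} {l : List (Fin (n + 1))} (h : F.DharSeq c l) :
    F.IsRank fun v => l.idxOf v := by
  have h0 : l.idxOf 0 = 0 := by
    rcases l with _ | ⟨a, l⟩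
    · have := h.1
      simp at this
    · have := h.2.2.1
      simp only [List.head?_cons, Option.some.injEq] at this
      simp [this]
  have hinj : ∀ u v, l.idxOf u = l.idxOf v → u = v := fun u v huv =>
    (List.idxOf_inj (h.mem u)).1 huv
  refine ⟨fun v hv => ?_, fun u v huv he => ?_⟩
  · have : l.idxOf v ≠ l.idxOf 0 := fun he => hv (hinj _ _ he)
    show l.idxOf 0 < l.idxOf v
    omega
  · have := hinj _ _ he
    subst this
    have := huv.mem_rows_iff
    tauto

theorem DharSeq.laterCount_le {c : Fin (n + 1) → ℕ} {l : List (Fin (n + 1))}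
    (h : F.DharSeq c l) : ∀ v, F.laterCount (fun v => l.idxOf v) v ≤ c v := by
  intro v
  by_cases hv : v = 0
  · simp [hv]
  have hlt : l.idxOf v < l.length := List.idxOf_lt_length_of_mem (h.mem v)
  have hget : l.get ⟨l.idxOf v, hlt⟩ = v := List.idxOf_get hlt
  have hpos : 1 ≤ l.idxOf v := by
    have : l.idxOf 0 < l.idxOf v := h.isRank.1 v hv
    omega
  have htake : ∀ w, w ∈ l.take (l.idxOf v) ↔ l.idxOf w < l.idxOf v := by
    intro w
    rw [List.mem_take_iff_idxOf_lt (h.mem w)]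
  have hD := h.2.2.2 _ hlt hpos
  rw [hget, toppleList_apply hv _ _ (h.2.1.sublist (List.take_sublist _ _))
    (by rw [htake]; omega)] at hD
  have hset : {w | w ∈ l.take (l.idxOf v) ∧ F.Adj w v}
      = {w | F.Adj w v ∧ l.idxOf w < l.idxOf v} := by
    ext w
    simp only [Set.mem_ofPred_eq, htake]
    tauto
  rw [hset, ← ncard_earlier_add_later h.isRank v] at hD
  rw [laterCount_of_ne _ hv]
  omega

theorem exists_dharSeq {c r : Fin (n + 1) → ℕ} (hr : F.IsRank r)
    (hc : ∀ v, F.laterCount r v ≤ c v) : ∃ l, F.DharSeq c l := by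
  let l := (List.finRange (n + 1)).insertionSort (fun u v => r u ≤ r v)
  have hperm : l.Perm (List.finRange (n + 1)) := List.perm_insertionSort _ _
  have hsort : l.Pairwise (fun u v => r u ≤ r v) := by
    have : Std.Total (fun u v : Fin (n + 1) => r u ≤ r v) := ⟨fun u v => le_total _ _⟩
    have : IsTrans (Fin (n + 1)) (fun u v => r u ≤ r v) := ⟨fun _ _ _ => le_trans⟩
    exact List.pairwise_insertionSort _ _
  have hmem : ∀ v, v ∈ l := fun v => hperm.mem_iff.2 (List.mem_finRange v)
  have hnd : l.Nodup := hperm.nodup_iff.2 (List.nodup_finRange _)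
  have hlen : l.length = n + 1 := by rw [hperm.length_eq, List.length_finRange]
  have hidx : ∀ i (hi : i < l.length) w, r w < r l[i] → w ∈ l.take i := by
    intro i hi w hw
    obtain ⟨j, hj, rfl⟩ := List.getElem_of_mem (hmem w)
    rw [List.mem_take_iff_getElem]
    refine ⟨j, ?_, rfl⟩
    by_contra hji
    rcases Nat.lt_or_ge i j with hij | hij
    · have := List.pairwise_iff_getElem.1 hsort i j hi hj hij
      omega
    · have : j = i := by omega
      subst this
      omega
  refine ⟨l, hlen, hnd, ?_, ?_⟩
  · have h0 : 0 < l.length := by omega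
    rw [List.head?_eq_getElem?, List.getElem?_eq_getElem h0]
    by_contra hne
    have := hidx 0 h0 0 (hr.1 _ (fun h => hne (by rw [h])))
    simp at this
  · intro i hi h1
    have hget : l.get ⟨i, hi⟩ = l[i] := rfl
    rw [hget]
    have hni : l[i] ∉ l.take i := by
      rw [List.mem_take_iff_getElem]
      rintro ⟨j, hj, he⟩
      have := (hnd.getElem_inj_iff).1 he
      omega
    have hv : l[i] ≠ 0 := by
      intro h0
      have hne : l[0] ≠ 0 := by
        rw [← h0]
        intro he
        have := (hnd.getElem_inj_iff).1 he
        omega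
      have h01 := hr.1 _ hne
      have := hidx 0 (by omega) 0 h01
      simp at this
    rw [toppleList_apply hv _ _ (hnd.sublist (List.take_sublist _ _)) hni]
    have hsub : {w | F.Adj w l[i] ∧ r w < r l[i]}.ncard
        ≤ {w | w ∈ l.take i ∧ F.Adj w l[i]}.ncard :=
      Set.ncard_le_ncard fun w hw => ⟨hidx i hi w hw.2, hw.1⟩
    have := ncard_earlier_add_later hr l[i]
    have hcv := hc l[i]
    rw [laterCount_of_ne _ hv] at hcv
    omega

theorem recurrent_iff {c : Fin (n + 1) → ℕ} :
    F.Recurrent c ↔ c 0 = 0 ∧ F.Stable c ∧ ∃ r, F.IsRank r ∧ ∀ v, F.laterCount r v ≤ c v := by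
  constructor
  · rintro ⟨h0, hs, l, hl⟩
    exact ⟨h0, hs, _, hl.isRank, hl.laterCount_le⟩
  · rintro ⟨h0, hs, r, hr, hc⟩
    exact ⟨h0, hs, exists_dharSeq hr hc⟩

theorem two_mul_sum_laterCount_add {r : Fin (n + 1) → ℕ} (hr : F.IsRank r) :
    2 * (∑ v, F.laterCount r v + F.deg 0) = ∑ v, F.deg v := by
  have hsum : ∑ v, F.laterCount r v + F.deg 0 = ∑ v, {w | F.Adj w v ∧ r v < r w}.ncard := by
    have h0 : F.deg 0 = {w | F.Adj w 0 ∧ r 0 < r w}.ncard := by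
      rw [← ncard_earlier_add_later hr 0]
      have : {w | F.Adj w 0 ∧ r w < r 0} = ∅ := by
        ext w
        simp only [Set.mem_ofPred_eq, Set.mem_empty_iff_false, iff_false, not_and, not_lt]
        intro _
        by_cases hw : w = 0
        · rw [hw]
        · exact (hr.1 w hw).le
      rw [this, Set.ncard_empty, zero_add]
    rw [Fin.sum_univ_succ, Fin.sum_univ_succ, laterCount_zero, h0, zero_add, add_comm]
    exact congrArg _ <| Finset.sum_congr rfl fun i _ => laterCount_of_ne r (Fin.succ_ne_zero i)
  have hcard : ∀ p : Fin (n + 1) → Prop, {w | p w}.ncard = ∑ w, if p w then 1 else 0 := by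
    intro p
    rw [Set.ncard_eq_toFinset_card', Finset.sum_boole]
    simp
  have hswap : ∑ v, {w | F.Adj w v ∧ r v < r w}.ncard
      = ∑ v, {w | F.Adj w v ∧ r w < r v}.ncard := by
    simp only [hcard]
    rw [Finset.sum_comm]
    refine Finset.sum_congr rfl fun v _ => Finset.sum_congr rfl fun w _ => ?_
    congr 1
    exact propext ⟨fun h => ⟨h.1.symm, h.2⟩, fun h => ⟨h.1.symm, h.2⟩⟩
  rw [hsum, two_mul]
  nth_rewrite 1 [hswap]
  rw [← Finset.sum_add_distrib]
  exact Finset.sum_congr rfl fun v _ => ncard_earlier_add_later hr v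

theorem recMin_laterCount {r : Fin (n + 1) → ℕ} (hr : F.IsRank r)
    (hs : F.Stable (F.laterCount r)) : F.RecMin (F.laterCount r) := by
  refine ⟨recurrent_iff.2 ⟨laterCount_zero r, hs, r, hr, fun _ => le_rfl⟩, fun c' hc' => ?_⟩
  obtain ⟨-, -, r', hr', hle⟩ := recurrent_iff.1 hc'
  have h1 := two_mul_sum_laterCount_add hr
  have h2 := two_mul_sum_laterCount_add hr'
  have h3 : ∑ v, F.laterCount r' v ≤ ∑ v, c' v := Finset.sum_le_sum fun v _ => hle v
  omega

theorem RecMin.eq_laterCount {c r : Fin (n + 1) → ℕ} (hc : F.RecMin c) (hr : F.IsRank r)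
    (hle : ∀ v, F.laterCount r v ≤ c v) : c = F.laterCount r := by
  have hrec : F.Recurrent (F.laterCount r) :=
    recurrent_iff.2 ⟨laterCount_zero r, fun v hv => (hle v).trans_lt (hc.1.2.1 v hv),
      r, hr, fun _ => le_rfl⟩
  have hsum := hc.2 _ hrec
  funext v
  have := (Finset.sum_eq_sum_iff_of_le fun v _ => hle v).1
    (le_antisymm (Finset.sum_le_sum fun v _ => hle v) hsum)
  exact (this v (Finset.mem_univ v)).symm

/-- The vertices toppled strictly before block `k` of the canonical toppling. -/
def toppledBefore (F : Ferrers n) (c : Fin (n + 1) → ℕ) (k : ℕ) : Set (Fin (n + 1)) :=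
  {v | ∃ j < k, v ∈ F.canonTop c j}

theorem toppledBefore_succ (c : Fin (n + 1) → ℕ) (k : ℕ) :
    F.toppledBefore c (k + 1) = F.toppledBefore c k ∪ F.canonTop c k := by
  ext v
  simp only [toppledBefore, Set.mem_union, Set.mem_ofPred_eq]
  constructor
  · rintro ⟨j, hj, h⟩
    rcases Nat.lt_succ_iff_lt_or_eq.1 hj with h' | rfl
    · exact Or.inl ⟨j, h', h⟩
    · exact Or.inr h
  · rintro (⟨j, hj, h⟩ | h)
    · exact ⟨j, by omega, h⟩
    · exact ⟨k, by omega, h⟩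

theorem canonTop_zero (c : Fin (n + 1) → ℕ) : F.canonTop c 0 = {0} := rfl

theorem mem_canonTop_succ {c : Fin (n + 1) → ℕ} {k : ℕ} {v : Fin (n + 1)} :
    v ∈ F.canonTop c (k + 1) ↔
      v ≠ 0 ∧ (v ∈ F.rows ↔ k % 2 ≠ 0) ∧ F.deg v ≤ F.canonConfig c (k + 1) v := by
  change (v ≠ 0 ∧ (if k % 2 = 0 then v ∉ F.rows else v ∈ F.rows) ∧
    F.deg v ≤ F.canonConfig c (k + 1) v) ↔ _
  by_cases hk : k % 2 = 0 <;> simp [hk]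

theorem canonConfig_succ {c : Fin (n + 1) → ℕ} {k : ℕ} {u : Fin (n + 1)} (hu : u ≠ 0) :
    F.canonConfig c (k + 1) u = F.canonConfig c k u
      + {w | w ∈ F.canonTop c k ∧ F.Adj w u}.ncard
      - if u ∈ F.canonTop c k then F.deg u else 0 := by
  change F.toppleSet (F.canonConfig c k) (F.canonTop c k) u = _
  simp only [toppleSet, hu, if_false]

theorem canonConfig_invariant {c : Fin (n + 1) → ℕ} (hs : F.Stable c) (k : ℕ) :
    (∀ u, u ≠ 0 → F.canonConfig c k u + (if u ∈ F.toppledBefore c k then F.deg u else 0)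
      = c u + {w | w ∈ F.toppledBefore c k ∧ F.Adj w u}.ncard) ∧
    Disjoint (F.toppledBefore c k) (F.canonTop c k) := by
  induction k with
  | zero =>
    have h0 : F.toppledBefore c 0 = ∅ := by
      ext v
      simp [toppledBefore]
    rw [h0]
    refine ⟨fun u _ => ?_, Set.empty_disjoint _⟩
    simp [canonConfig, canonAux]
  | succ k ih =>
    obtain ⟨ih, hdisj⟩ := ih
    have key : ∀ u, u ≠ 0 →
        F.canonConfig c (k + 1) u + (if u ∈ F.toppledBefore c (k + 1) then F.deg u else 0)
        = c u + {w | w ∈ F.toppledBefore c (k + 1) ∧ F.Adj w u}.ncard := by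
      intro u hu
      have hcard : {w | w ∈ F.toppledBefore c (k + 1) ∧ F.Adj w u}.ncard
          = {w | w ∈ F.toppledBefore c k ∧ F.Adj w u}.ncard
            + {w | w ∈ F.canonTop c k ∧ F.Adj w u}.ncard := by
        rw [← Set.ncard_union_eq]
        · congr 1
          ext w
          simp only [toppledBefore_succ, Set.mem_union, Set.mem_ofPred_eq, or_and_right]
        · rw [Set.disjoint_left] at hdisj ⊢
          exact fun w h1 h2 => hdisj h1.1 h2.1
      have hih := ih u hu
      rw [hcard, canonConfig_succ hu]
      by_cases h2 : u ∈ F.canonTop c k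
      · have h1 : u ∉ F.toppledBefore c k := fun h => Set.disjoint_left.1 hdisj h h2
        have h3 : u ∈ F.toppledBefore c (k + 1) := by
          rw [toppledBefore_succ]
          exact Or.inr h2
        have hge : F.deg u ≤ F.canonConfig c k u := by
          cases k with
          | zero => exact absurd h2 hu
          | succ k => exact (mem_canonTop_succ.1 h2).2.2
        simp only [h1, h2, h3, if_true, if_false] at hih ⊢
        omega
      · have h3 : u ∈ F.toppledBefore c (k + 1) ↔ u ∈ F.toppledBefore c k := by
          rw [toppledBefore_succ]
          simp [h2]
        simp only [h2, h3, if_false]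
        omega
    refine ⟨key, Set.disjoint_left.2 fun v hv hv' => ?_⟩
    obtain ⟨hv0, -, hdeg⟩ := mem_canonTop_succ.1 hv'
    have := key v hv0
    have hlt := hs v hv0
    have hle : {w | w ∈ F.toppledBefore c (k + 1) ∧ F.Adj w v}.ncard ≤ F.deg v := by
      rw [deg_eq_ncard]
      exact Set.ncard_le_ncard fun w hw => hw.2
    rw [if_pos hv] at this
    omega

theorem mem_canonTop_succ_iff {c : Fin (n + 1) → ℕ} (hs : F.Stable c) {k : ℕ}
    {v : Fin (n + 1)} :
    v ∈ F.canonTop c (k + 1) ↔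
      v ≠ 0 ∧ (v ∈ F.rows ↔ k % 2 ≠ 0) ∧ v ∉ F.toppledBefore c (k + 1) ∧
        F.deg v ≤ c v + {w | w ∈ F.toppledBefore c (k + 1) ∧ F.Adj w v}.ncard := by
  obtain ⟨h1, h2⟩ := canonConfig_invariant hs (k + 1)
  constructor
  · intro h
    have hnot := fun h' => Set.disjoint_left.1 h2 h' h
    obtain ⟨hv, hpar, hdeg⟩ := mem_canonTop_succ.1 h
    have := h1 v hv
    rw [if_neg hnot] at this
    exact ⟨hv, hpar, hnot, by omega⟩
  · rintro ⟨hv, hpar, hnot, hdeg⟩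
    have := h1 v hv
    rw [if_neg hnot] at this
    exact mem_canonTop_succ.2 ⟨hv, hpar, by omega⟩

theorem eq_of_mem_canonTop {c : Fin (n + 1) → ℕ} (hs : F.Stable c) {i j : ℕ}
    {v : Fin (n + 1)} (hi : v ∈ F.canonTop c i) (hj : v ∈ F.canonTop c j) : i = j := by
  rcases lt_trichotomy i j with h | h | h
  · exact absurd hj (Set.disjoint_left.1 (canonConfig_invariant hs j).2 ⟨i, h, hi⟩)
  · exact h
  · exact absurd hi (Set.disjoint_left.1 (canonConfig_invariant hs i).2 ⟨j, h, hj⟩)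

theorem Recurrent.exists_mem_canonTop {c : Fin (n + 1) → ℕ} (hc : F.Recurrent c)
    (v : Fin (n + 1)) : ∃ k, v ∈ F.canonTop c k := by
  obtain ⟨-, hs, r, hr, hle⟩ := recurrent_iff.1 hc
  induction hm : r v using Nat.strong_induction_on generalizing v with
  | _ m ih =>
    subst hm
    by_cases hv : v = 0
    · exact ⟨0, by rw [hv, canonTop_zero]; rfl⟩
    by_contra hnot
    let K := Finset.univ.sup (F.bIdx c)
    have hK : ∀ w, r w < r v → ∀ k, K < k → w ∈ F.toppledBefore c k := by
      intro w hw k hk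
      refine ⟨F.bIdx c w, ?_, Nat.sInf_mem (ih _ hw w rfl)⟩
      exact (Finset.le_sup (Finset.mem_univ w)).trans_lt hk
    have hpar : ∃ k, K ≤ k ∧ (v ∈ F.rows ↔ k % 2 ≠ 0) := by
      by_cases hvr : v ∈ F.rows
      · exact ⟨2 * K + 1, by omega, by simp only [hvr, true_iff]; omega⟩
      · exact ⟨2 * K, by omega, by simp only [hvr, false_iff]; omega⟩
    obtain ⟨k, hk, hpar⟩ := hpar
    refine hnot ⟨k + 1, (mem_canonTop_succ_iff hs).2
      ⟨hv, hpar, fun ⟨j, _, hj⟩ => hnot ⟨j, hj⟩, ?_⟩⟩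
    have hsub : {w | F.Adj w v ∧ r w < r v}.ncard
        ≤ {w | w ∈ F.toppledBefore c (k + 1) ∧ F.Adj w v}.ncard :=
      Set.ncard_le_ncard fun w hw => ⟨hK w hw.2 _ (by omega), hw.1⟩
    have hsum := ncard_earlier_add_later hr v
    have hcv := hle v
    rw [laterCount_of_ne _ hv] at hcv
    omega

theorem Recurrent.mem_canonTop_iff {c : Fin (n + 1) → ℕ} (hc : F.Recurrent c) {k : ℕ}
    {v : Fin (n + 1)} : v ∈ F.canonTop c k ↔ F.bIdx c v = k := by
  have hmem : v ∈ F.canonTop c (F.bIdx c v) := Nat.sInf_mem (hc.exists_mem_canonTop v)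
  exact ⟨fun h => eq_of_mem_canonTop hc.2.1 hmem h, fun h => h ▸ hmem⟩

theorem Recurrent.mem_toppledBefore_iff {c : Fin (n + 1) → ℕ} (hc : F.Recurrent c) {k : ℕ}
    {v : Fin (n + 1)} : v ∈ F.toppledBefore c k ↔ F.bIdx c v < k := by
  simp only [toppledBefore, Set.mem_ofPred_eq, hc.mem_canonTop_iff]
  exact ⟨fun ⟨j, hj, h⟩ => h ▸ hj, fun h => ⟨_, h, rfl⟩⟩

/-- A layering of the graph: the sink is the only vertex of layer `0`, rows lie in even layers,
columns in odd ones, and every non-sink vertex has a neighbour in the preceding layer. -/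
structure IsLayering (F : Ferrers n) (b : Fin (n + 1) → ℕ) : Prop where
  eq_zero_iff : ∀ v, b v = 0 ↔ v = 0
  even_iff : ∀ v, b v % 2 = 0 ↔ v ∈ F.rows
  exists_adj : ∀ v, v ≠ 0 → ∃ w, F.Adj w v ∧ b w + 1 = b v

theorem isRank_of_parity {b : Fin (n + 1) → ℕ} (h0 : ∀ v, b v = 0 ↔ v = 0)
    (hpar : ∀ v, b v % 2 = 0 ↔ v ∈ F.rows) : F.IsRank b := by
  refine ⟨fun v hv => ?_, fun u v huv he => ?_⟩
  · rw [(h0 0).2 rfl]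
    exact Nat.pos_of_ne_zero fun h => hv ((h0 v).1 h)
  · have := huv.mem_rows_iff
    rw [← hpar, ← hpar, he] at this
    tauto

theorem IsLayering.isRank {b : Fin (n + 1) → ℕ} (hb : F.IsLayering b) : F.IsRank b :=
  isRank_of_parity hb.eq_zero_iff hb.even_iff

theorem Recurrent.bIdx_eq_zero_iff {c : Fin (n + 1) → ℕ} (hc : F.Recurrent c)
    (v : Fin (n + 1)) : F.bIdx c v = 0 ↔ v = 0 := by
  rw [← hc.mem_canonTop_iff, canonTop_zero]
  rfl

theorem Recurrent.bIdx_even_iff {c : Fin (n + 1) → ℕ} (hc : F.Recurrent c)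
    (v : Fin (n + 1)) : F.bIdx c v % 2 = 0 ↔ v ∈ F.rows := by
  have hmem := (hc.mem_canonTop_iff (v := v)).2 rfl
  rcases hk : F.bIdx c v with _ | k
  · rw [hc.bIdx_eq_zero_iff] at hk
    simp [hk, F.zero_mem]
  · rw [hk] at hmem
    rw [((mem_canonTop_succ_iff hc.2.1).1 hmem).2.1]
    omega

theorem Recurrent.isRank_bIdx {c : Fin (n + 1) → ℕ} (hc : F.Recurrent c) :
    F.IsRank (F.bIdx c) :=
  isRank_of_parity hc.bIdx_eq_zero_iff hc.bIdx_even_iff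

theorem RecMin.eq_laterCount_bIdx {c : Fin (n + 1) → ℕ} (hc : F.RecMin c) :
    c = F.laterCount (F.bIdx c) := by
  have hr := hc.1.isRank_bIdx
  refine hc.eq_laterCount hr fun v => ?_
  by_cases hv : v = 0
  · simp [hv]
  have hmem := (hc.1.mem_canonTop_iff (v := v)).2 rfl
  obtain ⟨k, hk⟩ := Nat.exists_eq_succ_of_ne_zero (mt (hc.1.bIdx_eq_zero_iff v).1 hv)
  rw [hk, Nat.succ_eq_add_one] at hmem
  have hdeg := ((mem_canonTop_succ_iff hc.1.2.1).1 hmem).2.2.2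
  have hset : {w | w ∈ F.toppledBefore c (k + 1) ∧ F.Adj w v}
      = {w | F.Adj w v ∧ F.bIdx c w < F.bIdx c v} := by
    ext w
    simp only [hc.1.mem_toppledBefore_iff, hk, Set.mem_ofPred_eq]
    tauto
  rw [hset, ← ncard_earlier_add_later hr v] at hdeg
  rw [laterCount_of_ne _ hv]
  omega

theorem RecMin.isLayering {c : Fin (n + 1) → ℕ} (hc : F.RecMin c) :
    F.IsLayering (F.bIdx c) := by
  have hr := hc.1.isRank_bIdx
  have hpar := hc.1.bIdx_even_iff
  refine ⟨hc.1.bIdx_eq_zero_iff, hpar, fun v hv => ?_⟩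
  obtain ⟨k, hk⟩ := Nat.exists_eq_succ_of_ne_zero (mt (hc.1.bIdx_eq_zero_iff v).1 hv)
  rw [Nat.succ_eq_add_one] at hk
  have hcv : c v = {w | F.Adj w v ∧ F.bIdx c v < F.bIdx c w}.ncard := by
    rw [← laterCount_of_ne _ hv, ← hc.eq_laterCount_bIdx]
  by_contra! hno
  have hsmall : ∀ w, F.Adj w v → ¬ F.bIdx c v < F.bIdx c w → F.bIdx c w + 3 ≤ F.bIdx c v := by
    intro w hw hlt
    have h1 := hno w hw
    have h2 := hw.mem_rows_iff
    rw [← hpar, ← hpar] at h2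
    omega
  have hlt : c v + {w | F.Adj w v ∧ F.bIdx c w + 3 ≤ F.bIdx c v}.ncard < F.deg v := by
    rcases Nat.lt_or_ge k 2 with hk2 | hk2
    · have hset : {w | F.Adj w v ∧ F.bIdx c w + 3 ≤ F.bIdx c v} = ∅ := by
        ext w
        simp only [Set.mem_ofPred_eq, Set.mem_empty_iff_false, iff_false, not_and]
        omega
      rw [hset, Set.ncard_empty]
      exact hc.1.2.1 v hv
    · obtain ⟨j, rfl⟩ := Nat.exists_eq_add_of_le' hk2
      by_contra hge
      have hset : {w | w ∈ F.toppledBefore c (j + 1) ∧ F.Adj w v}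
          = {w | F.Adj w v ∧ F.bIdx c w + 3 ≤ F.bIdx c v} := by
        ext w
        simp only [hc.1.mem_toppledBefore_iff, hk, Set.mem_ofPred_eq]
        constructor
        · rintro ⟨h1, h2⟩
          exact ⟨h2, by omega⟩
        · rintro ⟨h1, h2⟩
          exact ⟨by omega, h1⟩
      have hmem : v ∈ F.canonTop c (j + 1) := by
        refine (mem_canonTop_succ_iff hc.1.2.1).2 ⟨hv, ?_, ?_, ?_⟩
        · rw [← hpar, hk]
          omega
        · rw [hc.1.mem_toppledBefore_iff]
          omega
        · rw [hset]
          omega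
      rw [hc.1.mem_canonTop_iff] at hmem
      omega
  have hle : {w | F.Adj w v ∧ F.bIdx c w < F.bIdx c v}.ncard
      ≤ {w | F.Adj w v ∧ F.bIdx c w + 3 ≤ F.bIdx c v}.ncard := by
    refine Set.ncard_le_ncard fun w hw => ⟨hw.1, hsmall w hw.1 ?_⟩
    have := hw.2
    omega
  have := ncard_earlier_add_later hr v
  omega

theorem IsLayering.stable {b : Fin (n + 1) → ℕ} (hb : F.IsLayering b) :
    F.Stable (F.laterCount b) := by
  intro v hv
  obtain ⟨w, hw, hwv⟩ := hb.exists_adj v hv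
  have hpos : 0 < {w | F.Adj w v ∧ b w < b v}.ncard :=
    (Set.ncard_pos).2 ⟨w, hw, by omega⟩
  have := ncard_earlier_add_later hb.isRank v
  rw [laterCount_of_ne _ hv]
  omega

theorem IsLayering.recMin {b : Fin (n + 1) → ℕ} (hb : F.IsLayering b) :
    F.RecMin (F.laterCount b) :=
  recMin_laterCount hb.isRank hb.stable

theorem IsLayering.canonTop_laterCount {b : Fin (n + 1) → ℕ} (hb : F.IsLayering b) (k : ℕ) :
    ∀ v, v ∈ F.canonTop (F.laterCount b) k ↔ b v = k := by
  induction k using Nat.strong_induction_on with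
  | _ k ih =>
    intro v
    rcases k with _ | k
    · rw [canonTop_zero, hb.eq_zero_iff]
      rfl
    have hbefore : ∀ w, w ∈ F.toppledBefore (F.laterCount b) (k + 1) ↔ b w < k + 1 := by
      intro w
      constructor
      · rintro ⟨j, hj, hw⟩
        rw [ih j hj] at hw
        omega
      · exact fun hw => ⟨b w, hw, (ih _ hw w).2 rfl⟩
    rw [mem_canonTop_succ_iff hb.stable]
    simp only [hbefore]
    have hsum := ncard_earlier_add_later hb.isRank v
    constructor
    · rintro ⟨hv, hpar, hge, hdeg⟩
      rw [laterCount_of_ne _ hv] at hdeg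
      rw [← hb.even_iff] at hpar
      by_contra hne
      obtain ⟨w, hw, hwv⟩ := hb.exists_adj v hv
      have hlt : {w | b w < k + 1 ∧ F.Adj w v}.ncard < {w | F.Adj w v ∧ b w < b v}.ncard := by
        refine Set.ncard_lt_ncard
          ⟨fun u hu => ⟨hu.2, by have := hu.1; omega⟩, fun hsub => ?_⟩
        have : b w < k + 1 := (hsub (show w ∈ {w | F.Adj w v ∧ b w < b v} from
          ⟨hw, by omega⟩)).1
        omega
      omega
    · intro hv
      have hv0 : v ≠ 0 := fun h => by
        rw [← hb.eq_zero_iff] at h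
        omega
      refine ⟨hv0, ?_, by omega, ?_⟩
      · rw [← hb.even_iff]
        omega
      · rw [laterCount_of_ne _ hv0, ← hsum, ← hv]
        have hset : {w | b w < b v ∧ F.Adj w v} = {w | F.Adj w v ∧ b w < b v} := by
          ext w
          exact and_comm
        rw [hset]
        omega

theorem IsLayering.bIdx_laterCount {b : Fin (n + 1) → ℕ} (hb : F.IsLayering b) :
    F.bIdx (F.laterCount b) = b := by
  funext v
  exact hb.recMin.1.mem_canonTop_iff.1 ((hb.canonTop_laterCount _ v).2 rfl)

theorem IsLayering.le {b : Fin (n + 1) → ℕ} (hb : F.IsLayering b) (v : Fin (n + 1)) :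
    b v ≤ n := by
  have hattained : ∀ m v, b v = m → ∀ k ≤ m, ∃ w, b w = k := by
    intro m
    induction m with
    | zero => exact fun v hv k hk => ⟨v, by omega⟩
    | succ m ih =>
      intro v hv k hk
      rcases Nat.lt_or_ge m k with h | h
      · exact ⟨v, by omega⟩
      · have hv0 : v ≠ 0 := fun h => by
          rw [← hb.eq_zero_iff] at h
          omega
        obtain ⟨w, -, hw⟩ := hb.exists_adj v hv0
        exact ih w (by omega) k h
  have hsub : Finset.range (b v + 1) ⊆ Finset.univ.image b := by
    intro k hk
    obtain ⟨w, hw⟩ := hattained _ v rfl k (by rw [Finset.mem_range] at hk; omega)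
    exact Finset.mem_image.2 ⟨w, Finset.mem_univ w, hw⟩
  have := (Finset.card_le_card hsub).trans Finset.card_image_le
  simp only [Finset.card_range, Finset.card_univ, Fintype.card_fin] at this
  omega

/-- The order in which letters appear in the word of a layering: layer by layer, odd layers
increasingly and even layers decreasingly. -/
def WordLT (b : Fin (n + 1) → ℕ) (u v : Fin (n + 1)) : Prop :=
  b u < b v ∨ b u = b v ∧ if b u % 2 = 1 then u < v else v < u

theorem WordLT.le {b : Fin (n + 1) → ℕ} {u v : Fin (n + 1)} (h : WordLT b u v) : b u ≤ b v := by
  rcases h with h | h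
  · exact h.le
  · exact h.1.le

theorem WordLT.trans {b : Fin (n + 1) → ℕ} {u v w : Fin (n + 1)} (h : WordLT b u v)
    (h' : WordLT b v w) : WordLT b u w := by
  rcases h with h | ⟨h1, h2⟩
  · exact Or.inl (h.trans_le h'.le)
  · rcases h' with h' | ⟨h1', h2'⟩
    · exact Or.inl (h1 ▸ h')
    · refine Or.inr ⟨h1.trans h1', ?_⟩
      rw [← h1] at h2'
      split_ifs at h2 h2' ⊢
      · exact h2.trans h2'
      · exact h2'.trans h2

theorem WordLT.irrefl {b : Fin (n + 1) → ℕ} {u : Fin (n + 1)} : ¬ WordLT b u u := by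
  rintro (h | ⟨-, h⟩)
  · exact lt_irrefl _ h
  · split_ifs at h <;> exact lt_irrefl _ h

theorem mem_blockWord {c : Fin (n + 1) → ℕ} {k : ℕ} {v : Fin (n + 1)} :
    v ∈ F.blockWord c k ↔ v ∈ F.canonTop c k := by
  simp only [blockWord]
  split_ifs <;> simp

theorem Recurrent.pairwise_zeta {c : Fin (n + 1) → ℕ} (hc : F.Recurrent c) :
    (F.zeta c).Pairwise (WordLT (F.bIdx c)) := by
  have hmem : ∀ k v, v ∈ F.blockWord c k → F.bIdx c v = k := fun k v hv =>
    hc.mem_canonTop_iff.1 (mem_blockWord.1 hv)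
  rw [zeta, List.pairwise_flatten]
  constructor
  · intro l hl
    obtain ⟨k, -, rfl⟩ := List.mem_map.1 hl
    have hpw : (F.blockWord c k).Pairwise fun u v => if k % 2 = 1 then u < v else v < u := by
      have hs := (Finset.sortedLT_sort (Set.toFinite (F.canonTop c k)).toFinset).pairwise
      simp only [blockWord]
      split_ifs
      · exact hs
      · exact List.pairwise_reverse.2 hs
    refine hpw.imp_of_mem fun {u v} hu hv h => Or.inr ?_
    rw [hmem k u hu, hmem k v hv]
    exact ⟨rfl, h⟩
  · rw [List.pairwise_map]
    refine (List.pairwise_lt_range.sublist (List.drop_sublist _ _)).imp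
      fun {i j} hij u hu v hv => ?_
    left
    rw [hmem i u hu, hmem j v hv]
    exact hij

theorem RecMin.mem_zeta {c : Fin (n + 1) → ℕ} (hc : F.RecMin c) (v : Fin (n + 1)) :
    v ∈ F.zeta c ↔ v ≠ 0 := by
  simp only [zeta, List.mem_flatten, List.mem_map, exists_exists_and_eq_and, mem_blockWord,
    hc.1.mem_canonTop_iff]
  have h0 := hc.1.bIdx_eq_zero_iff v
  have hle := hc.isLayering.le v
  have hrange : ∀ k, k ∈ (List.range (2 * n + 2)).drop 1 ↔ 1 ≤ k ∧ k < 2 * n + 2 := by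
    intro k
    rw [List.range_eq_range', List.drop_range', List.mem_range'_1]
    omega
  simp only [hrange]
  constructor
  · rintro ⟨k, hk, h⟩ hv
    have := h0.2 hv
    omega
  · intro hv
    refine ⟨_, ⟨?_, ?_⟩, rfl⟩
    · exact Nat.pos_of_ne_zero fun h => hv (h0.1 h)
    · omega

theorem Recurrent.nodup_zeta {c : Fin (n + 1) → ℕ} (hc : F.Recurrent c) : (F.zeta c).Nodup :=
  hc.pairwise_zeta.imp (S := (· ≠ ·)) fun {_ _} h he => WordLT.irrefl (he ▸ h)

theorem length_of_mem_iff_ne_zero {l : List (Fin (n + 1))} (hnd : l.Nodup)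
    (hmem : ∀ v, v ∈ l ↔ v ≠ 0) : l.length = n := by
  have : l.toFinset = Finset.univ.erase 0 := by
    ext v
    simp [hmem]
  rw [← List.toFinset_card_of_nodup hnd, this, Finset.card_erase_of_mem (Finset.mem_univ _),
    Finset.card_univ, Fintype.card_fin, Nat.add_sub_cancel]

theorem descentBottoms_eq_iff {l : List (Fin (n + 1))} (hnd : l.Nodup)
    (hmem : ∀ v, v ∈ l ↔ v ≠ 0) :
    descentBottoms l = {v : Fin (n + 1) | v ∈ F.rows ∧ v ≠ 0} ↔
      ∀ i (h : i + 1 < (0 :: l).length),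
        (0 :: l)[i + 1] < (0 :: l)[i] ↔ (0 :: l)[i + 1] ∈ F.rows := by
  constructor
  · intro hD i h
    have hl : i < l.length := by simpa using h
    have hne : l[i] ≠ 0 := (hmem _).1 (List.getElem_mem hl)
    have hiff : l[i] ∈ F.rows ↔ l[i] ∈ descentBottoms l := by
      rw [hD]
      exact ⟨fun h => ⟨h, hne⟩, fun h => h.1⟩
    rw [List.getElem_cons_succ, hiff]
    constructor
    · intro hlt
      rcases i with _ | i
      · exact absurd hlt (Fin.not_lt_zero _)
      · exact ⟨i, hl, rfl, hlt⟩
    · rintro ⟨j, hj, he, hlt⟩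
      have : j + 1 = i := hnd.getElem_inj_iff.1 he
      subst this
      exact hlt
  · intro hD
    ext v
    constructor
    · rintro ⟨i, hi, rfl, hlt⟩
      exact ⟨(hD (i + 1) (by simpa using hi)).1 hlt, (hmem _).1 (List.getElem_mem _)⟩
    · rintro ⟨hv, hv0⟩
      obtain ⟨j, hj, rfl⟩ := List.getElem_of_mem ((hmem v).2 hv0)
      have hlt := (hD j (by simpa using hj)).2 hv
      rcases j with _ | j
      · exact absurd hlt (Fin.not_lt_zero _)
      · exact ⟨j, hj, rfl, hlt⟩

theorem IsLayering.pairwise_cons {b : Fin (n + 1) → ℕ} (hb : F.IsLayering b)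
    {l : List (Fin (n + 1))} (hmem : ∀ v, v ∈ l ↔ v ≠ 0) (hl : l.Pairwise (WordLT b)) :
    (0 :: l).Pairwise (WordLT b) :=
  List.pairwise_cons.2 ⟨fun v hv => Or.inl (hb.isRank.1 v ((hmem v).1 hv)), hl⟩

section Consecutive

variable {b : Fin (n + 1) → ℕ} {m : List (Fin (n + 1))}

theorem eq_or_wordLT_of_lt_succ (hm : m.Pairwise (WordLT b)) (hmem : ∀ v, v ∈ m) {i : ℕ}
    (hi : i + 1 < m.length) {w : Fin (n + 1)} (hw : b w < b m[i + 1]) :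
    w = m[i] ∨ WordLT b w m[i] := by
  obtain ⟨j, hj, rfl⟩ := List.getElem_of_mem (hmem w)
  have hpw := List.pairwise_iff_getElem.1 hm
  rcases lt_trichotomy j i with h | h | h
  · exact Or.inr (hpw j i hj (by omega) h)
  · subst h
    exact Or.inl rfl
  · rcases Nat.eq_or_lt_of_le (Nat.succ_le_of_lt h) with h' | h'
    · subst h'
      exact absurd hw (lt_irrefl _)
    · have := (hpw (i + 1) j hi hj h').le
      omega

theorem IsLayering.getElem_succ_ne_zero (hb : F.IsLayering b) (hm : m.Pairwise (WordLT b))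
    {i : ℕ} (hi : i + 1 < m.length) : m[i + 1] ≠ 0 := by
  intro h0
  have hR := List.pairwise_iff_getElem.1 hm i (i + 1) (by omega) hi (by omega)
  have hle := hR.le
  rw [h0, (hb.eq_zero_iff 0).2 rfl, Nat.le_zero, hb.eq_zero_iff] at hle
  rw [h0, hle] at hR
  exact WordLT.irrefl hR

theorem IsLayering.le_succ (hb : F.IsLayering b) (hm : m.Pairwise (WordLT b))
    (hmem : ∀ v, v ∈ m) {i : ℕ} (hi : i + 1 < m.length) : b m[i + 1] ≤ b m[i] + 1 := by
  obtain ⟨w, -, hw⟩ := hb.exists_adj _ (hb.getElem_succ_ne_zero hm hi)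
  rcases eq_or_wordLT_of_lt_succ hm hmem hi (w := w) (by omega) with h | h
  · rw [← h]
    omega
  · have := h.le
    omega

theorem IsLayering.descent_iff (hb : F.IsLayering b) (hm : m.Pairwise (WordLT b))
    (hmem : ∀ v, v ∈ m) {i : ℕ} (hi : i + 1 < m.length) :
    m[i + 1] < m[i] ↔ m[i + 1] ∈ F.rows := by
  have hR := List.pairwise_iff_getElem.1 hm i (i + 1) (by omega) hi (by omega)
  have hpar := hb.even_iff m[i + 1]
  rcases hR with hlt | ⟨heq, hR⟩
  · obtain ⟨w, hadj, hw⟩ := hb.exists_adj _ (hb.getElem_succ_ne_zero hm hi)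
    have hwx := eq_or_wordLT_of_lt_succ hm hmem hi (w := w) (by omega)
    have hsame : w = m[i] ∨ if b w % 2 = 1 then w < m[i] else m[i] < w := by
      rcases hwx with h | h | h
      · exact Or.inl h
      · omega
      · exact Or.inr h.2
    rcases hadj with ⟨h1, h2, h3⟩ | ⟨h1, h2, h3⟩
    · have hev := (hb.even_iff w).2 h1
      rw [if_neg (by omega)] at hsame
      have : m[i] ≤ w := by
        rcases hsame with h | h
        · exact h.ge
        · exact h.le
      exact iff_of_false (this.trans h3.le).not_gt h2
    · have hodd := mt (hb.even_iff w).1 h2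
      rw [if_pos (by omega)] at hsame
      have : w ≤ m[i] := by
        rcases hsame with h | h
        · exact h.le
        · exact h.le
      exact iff_of_true (h3.trans_le this) h1
  · rw [heq] at hR
    split_ifs at hR with hodd
    · exact iff_of_false hR.not_gt fun h => by
        have := hpar.2 h
        omega
    · exact iff_of_true hR (hpar.1 (by omega))

theorem IsLayering.eq_of_pairwise {b' : Fin (n + 1) → ℕ} (hb : F.IsLayering b)
    (hb' : F.IsLayering b') {l : List (Fin (n + 1))} (hm : (0 :: l).Pairwise (WordLT b))
    (hm' : (0 :: l).Pairwise (WordLT b')) (hmem : ∀ v, v ∈ 0 :: l) : b = b' := by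
  have key : ∀ i (hi : i < (0 :: l).length), b (0 :: l)[i] = b' (0 :: l)[i] := by
    intro i
    induction i with
    | zero =>
      intro hi
      rw [List.getElem_cons_zero, (hb.eq_zero_iff 0).2 rfl, (hb'.eq_zero_iff 0).2 rfl]
    | succ i ih =>
      intro hi
      have h := ih (by omega)
      have h1 := hb.le_succ hm hmem hi
      have h2 := hb'.le_succ hm' hmem hi
      have h3 := (List.pairwise_iff_getElem.1 hm i (i + 1) (by omega) hi (by omega)).le
      have h4 := (List.pairwise_iff_getElem.1 hm' i (i + 1) (by omega) hi (by omega)).le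
      have h5 := (hb.even_iff (0 :: l)[i + 1]).trans (hb'.even_iff (0 :: l)[i + 1]).symm
      omega
  funext v
  obtain ⟨i, hi, rfl⟩ := List.getElem_of_mem (hmem v)
  exact key i hi

end Consecutive

/-- The number of changes between rows and columns among the first `i + 1` letters of `m`. -/
noncomputable def classChanges (F : Ferrers n) (m : List (Fin (n + 1))) : ℕ → ℕ
  | 0 => 0
  | i + 1 => classChanges F m i +
      if m.getD i 0 ∈ F.rows ↔ m.getD (i + 1) 0 ∈ F.rows then 0 else 1

theorem exists_isLayering_of_descents {m : List (Fin (n + 1))} (hlen : 0 < m.length)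
    (hm0 : m[0] = 0) (hnd : m.Nodup) (hmem : ∀ v, v ∈ m)
    (hD : ∀ i (h : i + 1 < m.length), m[i + 1] < m[i] ↔ m[i + 1] ∈ F.rows) :
    ∃ b, F.IsLayering b ∧ m.Pairwise (WordLT b) := by
  let b : Fin (n + 1) → ℕ := fun v => F.classChanges m (m.idxOf v)
  have hb : ∀ i (hi : i < m.length), b m[i] = F.classChanges m i := fun i hi => by
    simp only [b, hnd.idxOf_getElem i hi]
  have hb0 : b 0 = 0 := by
    rw [← hm0, hb 0 hlen]
    rfl
  have hstep : ∀ i (hi : i + 1 < m.length),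
      b m[i + 1] = b m[i] + if m[i] ∈ F.rows ↔ m[i + 1] ∈ F.rows then 0 else 1 := by
    intro i hi
    rw [hb _ hi, hb i (by omega), classChanges, List.getD_eq_getElem _ _ hi,
      List.getD_eq_getElem _ _ (by omega : i < m.length)]
  have hpar : ∀ i (hi : i < m.length), b m[i] % 2 = 0 ↔ m[i] ∈ F.rows := by
    intro i
    induction i with
    | zero =>
      intro hi
      rw [hm0, hb0]
      simp [F.zero_mem]
    | succ i ih =>
      intro hi
      have h := ih (by omega)
      rw [hstep i hi]
      split_ifs with hc
      · rw [← hc, ← h, Nat.add_zero]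
      · have : m[i + 1] ∈ F.rows ↔ ¬ m[i] ∈ F.rows := by tauto
        rw [this, ← h]
        omega
  have hne : ∀ i (hi : i + 1 < m.length), m[i] ≠ m[i + 1] := fun i hi he => by
    have := hnd.getElem_inj_iff.1 he
    omega
  have hR : ∀ i (hi : i + 1 < m.length), WordLT b m[i] m[i + 1] := by
    intro i hi
    have h1 := hstep i hi
    split_ifs at h1 with hc
    · refine Or.inr ⟨by omega, ?_⟩
      split_ifs with hodd
      · have hnr : m[i + 1] ∉ F.rows := by
          rw [← hc, ← hpar i (by omega)]
          omega
        exact lt_of_le_of_ne (not_lt.1 (mt (hD i hi).1 hnr)) (hne i hi)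
      · refine (hD i hi).2 (hc.1 ((hpar i (by omega)).1 (by omega)))
    · exact Or.inl (by omega)
  have hpw : m.Pairwise (WordLT b) := by
    have : IsTrans (Fin (n + 1)) (WordLT b) := ⟨fun _ _ _ => WordLT.trans⟩
    exact (List.isChain_iff_getElem.2 fun i hi => hR i hi).pairwise
  have hfirst : ∀ h : 1 < m.length, b m[1] = 1 := by
    intro h
    have hnr : m[1] ∉ F.rows := by
      rw [← hD 0 h, hm0]
      exact Fin.not_lt_zero _
    rw [hstep 0 h, hm0, hb0]
    simp [hnr, F.zero_mem]
  have hpos : ∀ i (hi : i + 1 < m.length), 1 ≤ b m[i + 1] := by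
    intro i
    induction i with
    | zero => exact fun hi => (hfirst hi).ge
    | succ i ih => exact fun hi => (ih (by omega)).trans (hR (i + 1) hi).le
  refine ⟨b, ⟨fun v => ⟨fun h => ?_, fun h => h ▸ hb0⟩, fun v => ?_, fun v hv => ?_⟩, hpw⟩
  · obtain ⟨i, hi, rfl⟩ := List.getElem_of_mem (hmem v)
    rcases i with _ | i
    · exact hm0
    · have := hpos i hi
      omega
  · obtain ⟨i, hi, rfl⟩ := List.getElem_of_mem (hmem v)
    exact hpar i hi
  · have key : ∀ i (hi : i + 1 < m.length), ∃ w, F.Adj w m[i + 1] ∧ b w + 1 = b m[i + 1] := by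
      intro i
      induction i with
      | zero =>
        intro hi
        have hnr : m[1] ∉ F.rows := by
          rw [← hD 0 hi, hm0]
          exact Fin.not_lt_zero _
        refine ⟨0, Or.inl ⟨F.zero_mem, hnr, ?_⟩, ?_⟩
        · have := hne 0 hi
          rw [hm0] at this
          exact Fin.pos_of_ne_zero this.symm
        · rw [hb0, hfirst hi]
      | succ i ih =>
        intro hi
        have h1 := hstep (i + 1) hi
        have hd := hD (i + 1) hi
        have hne' := hne (i + 1) hi
        split_ifs at h1 with hc
        · obtain ⟨w, hadj, hw⟩ := ih (by omega)
          refine ⟨w, ?_, by omega⟩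
          rcases hadj with ⟨h2, h3, h4⟩ | ⟨h2, h3, h4⟩
          · have hnr := mt hc.2 h3
            have := lt_of_le_of_ne (not_lt.1 (mt hd.1 hnr)) hne'
            exact Or.inl ⟨h2, hnr, h4.trans this⟩
          · have hr := hc.1 h2
            exact Or.inr ⟨hr, h3, (hd.2 hr).trans h4⟩
        · refine ⟨m[i + 1], ?_, by omega⟩
          by_cases hr : m[i + 1 + 1] ∈ F.rows
          · exact Or.inr ⟨hr, by tauto, hd.2 hr⟩
          · exact Or.inl ⟨by tauto, hr, lt_of_le_of_ne (not_lt.1 (mt hd.1 hr)) hne'⟩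
    obtain ⟨i, hi, rfl⟩ := List.getElem_of_mem (hmem v)
    rcases i with _ | i
    · exact absurd hm0 hv
    · exact key i hi

theorem mem_cons_zero {l : List (Fin (n + 1))} (hmem : ∀ v, v ∈ l ↔ v ≠ 0) (v : Fin (n + 1)) :
    v ∈ 0 :: l := by
  rw [List.mem_cons, hmem]
  exact eq_or_ne v 0

theorem RecMin.pairwise_cons_zeta {c : Fin (n + 1) → ℕ} (hc : F.RecMin c) :
    (0 :: F.zeta c).Pairwise (WordLT (F.bIdx c)) :=
  hc.isLayering.pairwise_cons hc.mem_zeta hc.1.pairwise_zeta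

end Ferrers

/-- The map `ζ` is a bijection from the minimal recurrent
configurations on `G(F)` onto the permutations of `{1, …, n}` whose set of descent
bottoms is exactly `rows(F) \ {0}`. -/
theorem zeta_bijection {n : ℕ} (F : Ferrers n) :
    Set.BijOn (F.zeta) {c | F.RecMin c}
      {l : List (Fin (n + 1)) | l.Nodup ∧ l.length = n ∧ (∀ v, v ∈ l ↔ v ≠ 0) ∧
        descentBottoms l = {v : Fin (n + 1) | v ∈ F.rows ∧ v ≠ 0}} := by
  refine ⟨fun c hc => ?_, fun c hc c' hc' heq => ?_, fun l hl => ?_⟩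
  · have hc : F.RecMin c := hc
    refine ⟨hc.1.nodup_zeta, Ferrers.length_of_mem_iff_ne_zero hc.1.nodup_zeta hc.mem_zeta,
      hc.mem_zeta, (Ferrers.descentBottoms_eq_iff hc.1.nodup_zeta hc.mem_zeta).2 fun i hi => ?_⟩
    exact hc.isLayering.descent_iff hc.pairwise_cons_zeta
      (Ferrers.mem_cons_zero hc.mem_zeta) hi
  · have hc : F.RecMin c := hc
    have hc' : F.RecMin c' := hc'
    have hb : F.bIdx c = F.bIdx c' :=
      hc.isLayering.eq_of_pairwise hc'.isLayering hc.pairwise_cons_zeta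
        (heq ▸ hc'.pairwise_cons_zeta) (Ferrers.mem_cons_zero hc.mem_zeta)
    rw [hc.eq_laterCount_bIdx, hb, ← hc'.eq_laterCount_bIdx]
  · obtain ⟨hnd, -, hmem, hD⟩ := hl
    have h0 : (0 : Fin (n + 1)) ∉ l := fun h => (hmem 0).1 h rfl
    obtain ⟨b, hb, hpw⟩ := Ferrers.exists_isLayering_of_descents
      (m := 0 :: l) (Nat.succ_pos _) rfl (List.nodup_cons.2 ⟨h0, hnd⟩) (Ferrers.mem_cons_zero hmem)
      ((Ferrers.descentBottoms_eq_iff hnd hmem).1 hD)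
    have hmin := hb.recMin
    refine ⟨F.laterCount b, hmin, ?_⟩
    have hz := hmin.1.pairwise_zeta
    rw [hb.bIdx_laterCount] at hz
    refine List.Perm.eq_of_pairwise (le := Ferrers.WordLT b)
      (fun u v _ _ h h' => absurd (h.trans h') Ferrers.WordLT.irrefl) hz
      (List.pairwise_cons.1 hpw).2 ?_
    rw [List.perm_ext_iff_of_nodup hmin.1.nodup_zeta hnd]
    exact fun v => (hmin.mem_zeta v).trans (hmem v).symm
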